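/- arXiv:2002.01130 — 6 statements merged into one kernel-verified Lean document; each statement's English description precedes it below -/
import Mathlib

section
/- Let k be a commutative ring with unity, N ≥ 2 an integer, and q ∈ k a primitive N-th root of unity. For all integers l, m with 0 ≤ l ≤ m ≤ N and (l,m) ≠ (0,N), (N,N), there exists a unique element c ∈ k such that [l]!·[m−l]!·c = [m]!. (Hence the q-binomial coefficient [m choose l] = [m]!/([l]![m−l]!), a priori defined in the total quotient ring of k, lies in k.) -/
/-- The `q`-integer `[m] = 1 + q + ⋯ + q^{m-1}`. -/
def qInt {k : Type*} [CommRing k] (q : k) (m : ℕ) : k := ∑ i ∈ Finset.range m, q ^ i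

/-- The `q`-factorial `[m]! = [m][m-1]⋯[1]`, with `[0]! = 1`. -/
def qFact {k : Type*} [CommRing k] (q : k) (m : ℕ) : k := ∏ i ∈ Finset.range m, qInt q (i + 1)

theorem qInt_add_aux {k : Type*} [CommRing k] (q : k) (a b : ℕ) :
    qInt q (a + b) = qInt q a + q ^ a * qInt q b := by
  simp only [qInt, Finset.sum_range_add, Finset.mul_sum, pow_add]

theorem qFact_succ_aux {k : Type*} [CommRing k] (q : k) (a : ℕ) :
    qFact q (a + 1) = qFact q a * qInt q (a + 1) := by
  simp only [qFact, Finset.prod_range_succ]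

theorem qBinom_exists_aux {k : Type*} [CommRing k] (q : k) (a b : ℕ) :
    ∃ c : k, qFact q a * qFact q b * c = qFact q (a + b) := by
  induction a generalizing b with
  | zero => exact ⟨1, by simp [qFact]⟩
  | succ a iha =>
    induction b with
    | zero => exact ⟨1, by simp [qFact]⟩
    | succ b ihb =>
      obtain ⟨c, hc⟩ := iha (b + 1)
      obtain ⟨d, hd⟩ := ihb
      refine ⟨c + q ^ (a + 1) * d, ?_⟩
      have e1 : a + 1 + (b + 1) = (a + 1 + b) + 1 := by ring
      have e2 : a + (b + 1) = a + 1 + b := by ring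
      have h := qInt_add_aux q (a + 1) (b + 1)
      rw [e2] at hc
      rw [e1] at h
      rw [e1, qFact_succ_aux q (a + 1 + b), h]
      rw [qFact_succ_aux q b] at hc ⊢
      rw [qFact_succ_aux q a] at hd ⊢
      linear_combination qInt q (a + 1) * hc + q ^ (a + 1) * qInt q (b + 1) * hd

theorem qFact_mem_aux {k : Type*} [CommRing k] (N : ℕ) (q : k)
    (hq2 : ∀ l : ℕ, 1 ≤ l → l ≤ N - 1 → q ^ l - 1 ∈ nonZeroDivisors k)
    (a : ℕ) (ha : a ≤ N - 1) : qFact q a ∈ nonZeroDivisors k := by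
  refine prod_mem fun i hi => ?_
  have hi' := Finset.mem_range.1 hi
  have h := hq2 (i + 1) (by omega) (by omega)
  rw [← geom_sum_mul] at h
  exact (mul_mem_nonZeroDivisors.1 h).1

/-- if `q` is a primitive `N`-th root of unity in a commutative ring `k`,
then for `0 ≤ l ≤ m ≤ N` with `(l,m) ≠ (0,N), (N,N)` there exists a unique `c ∈ k` with
`[l]! ⬝ [m-l]! ⬝ c = [m]!`; i.e. the `q`-binomial coefficient `[m choose l]` lies in `k`. -/
theorem qBinom_existsUnique
    {k : Type*} [CommRing k] (N : ℕ) (hN : 2 ≤ N) (q : k)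
    (hq1 : q ^ N = 1)
    (hq2 : ∀ l : ℕ, 1 ≤ l → l ≤ N - 1 → q ^ l - 1 ∈ nonZeroDivisors k)
    (l m : ℕ) (hlm : l ≤ m) (hmN : m ≤ N)
    (h0 : ¬(l = 0 ∧ m = N)) (h1 : ¬(l = N ∧ m = N)) :
    ∃! c : k, qFact q l * qFact q (m - l) * c = qFact q m := by
  obtain ⟨c, hc⟩ := qBinom_exists_aux q l (m - l)
  rw [Nat.add_sub_cancel' hlm] at hc
  refine ⟨c, hc, fun d hd => ?_⟩
  have hm := mul_mem (qFact_mem_aux N q hq2 l (by omega))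
    (qFact_mem_aux N q hq2 (m - l) (by omega))
  exact (mul_cancel_left_mem_nonZeroDivisors hm).1 (hd.trans hc.symm)
end

section
/- Let k be a commutative ring with unity, N ≥ 2 an integer, q ∈ k a primitive N-th root of unity, X a k-module, and φ, ψ k-linear endomorphisms of X satisfying ψ∘φ = q·(φ∘ψ). Then for every integer n with 1 ≤ n ≤ N, φ^n = Σ_{l=0}^{n} (−1)^l · q^{l(l−1)/2} · [n choose l] · (φ + ψ)^{n−l} ∘ ψ^{l}. -/
/-- `QBinomSpec q N m l c` says that `c` is *the* `q`-binomial coefficient `[m choose l]`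
(for `0 ≤ l ≤ m ≤ N`): in the special cases `(l,m) = (0,N), (N,N)` it is `1` by convention,
and otherwise it is characterized by `[l]! ⬝ [m-l]! ⬝ c = [m]!`. -/
def QBinomSpec {k : Type*} [CommRing k] (q : k) (N m l : ℕ) (c : k) : Prop :=
  ((m = N ∧ (l = 0 ∨ l = N)) → c = 1) ∧
  (¬(m = N ∧ (l = 0 ∨ l = N)) → qFact q l * qFact q (m - l) * c = qFact q m)

/-- Gaussian binomials by the Pascal recursion. -/
def gaussB {k : Type*} [CommRing k] (q : k) : ℕ → ℕ → k
  | _, 0 => 1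
  | 0, _ + 1 => 0
  | n + 1, l + 1 => gaussB q n (l + 1) + q ^ (n - l) * gaussB q n l

theorem gaussB_zero {k : Type*} [CommRing k] (q : k) (n : ℕ) : gaussB q n 0 = 1 := by
  cases n <;> simp [gaussB]

theorem gaussB_succ {k : Type*} [CommRing k] (q : k) (n l : ℕ) :
    gaussB q (n + 1) (l + 1) = gaussB q n (l + 1) + q ^ (n - l) * gaussB q n l := by
  simp [gaussB]

theorem gaussB_lt {k : Type*} [CommRing k] (q : k) (n : ℕ) :
    ∀ l, n < l → gaussB q n l = 0 := by
  induction n with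
  | zero => intro l hl; obtain ⟨l, rfl⟩ := Nat.exists_eq_succ_of_ne_zero (by omega : l ≠ 0); simp [gaussB]
  | succ n ih =>
    intro l hl
    obtain ⟨l, rfl⟩ := Nat.exists_eq_succ_of_ne_zero (by omega : l ≠ 0)
    rw [Nat.succ_eq_add_one, gaussB_succ, ih _ (by omega), ih _ (by omega)]; simp

theorem gaussB_self {k : Type*} [CommRing k] (q : k) (n : ℕ) : gaussB q n n = 1 := by
  induction n with
  | zero => exact gaussB_zero q 0
  | succ n ih => rw [gaussB_succ, ih, gaussB_lt q n _ (by omega)]; simp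

theorem qFact_succ' {k : Type*} [CommRing k] (q : k) (n : ℕ) :
    qFact q (n + 1) = qFact q n * qInt q (n + 1) := by
  simp [qFact, Finset.prod_range_succ]

theorem qInt_add' {k : Type*} [CommRing k] (q : k) (m l : ℕ) :
    qInt q (m + l) = qInt q m + q ^ m * qInt q l := by
  simp [qInt, Finset.sum_range_add, Finset.mul_sum, pow_add]

theorem gaussB_fact {k : Type*} [CommRing k] (q : k) (s : ℕ) : ∀ l m, l + m = s →
    qFact q l * qFact q m * gaussB q (l + m) l = qFact q (l + m) := by
  induction s with
  | zero =>
    intro l m h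
    obtain ⟨rfl, rfl⟩ : l = 0 ∧ m = 0 := by omega
    simp [qFact, gaussB]
  | succ s ih =>
    intro l m h
    rcases l with _ | l
    · simp [qFact, gaussB_zero]
    rcases m with _ | m
    · rw [Nat.add_zero, gaussB_self]; simp [qFact]
    have h1 := ih (l + 1) m (by omega)
    have h2 := ih l (m + 1) (by omega)
    have e1 : l + 1 + m = s := by omega
    have e2 : l + (m + 1) = s := by omega
    have e3 : l + 1 + (m + 1) = s + 1 := by omega
    have e4 : s - l = m + 1 := by omega
    have e5 : s + 1 = (m + 1) + (l + 1) := by omega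
    rw [e1] at h1
    rw [e2] at h2
    rw [e3, gaussB_succ, e4, qFact_succ' q s]
    have e6 : qInt q (s + 1) = qInt q (m + 1) + q ^ (m + 1) * qInt q (l + 1) := by
      rw [e5, qInt_add']
    rw [e6]
    rw [qFact_succ'] at h1 h2 ⊢
    rw [qFact_succ' q m]
    linear_combination qInt q (m + 1) * h1 + q ^ (m + 1) * qInt q (l + 1) * h2

theorem psi_pow {k : Type*} [CommRing k] (q : k)
    {X : Type*} [AddCommGroup X] [Module k X]
    (φ ψ : Module.End k X) (hcomm : ψ * φ = q • (φ * ψ)) (n : ℕ) :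
    ψ * φ ^ n = q ^ n • (φ ^ n * ψ) := by
  induction n with
  | zero => simp
  | succ n ih =>
    rw [pow_succ, ← mul_assoc, ih, smul_mul_assoc, mul_assoc, hcomm, mul_smul_comm, smul_smul,
      pow_succ, mul_assoc]

theorem gauss_expand {k : Type*} [CommRing k] (q : k)
    {X : Type*} [AddCommGroup X] [Module k X]
    (φ ψ : Module.End k X) (hcomm : ψ * φ = q • (φ * ψ)) (n : ℕ) :
    φ ^ n = ∑ l ∈ Finset.range (n + 1),
      ((-1 : k) ^ l * q ^ (l.choose 2) * gaussB q n l) • ((φ + ψ) ^ (n - l) * ψ ^ l) := by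
  induction n with
  | zero => simp [gaussB]
  | succ n ih =>
    have h : φ ^ (n + 1) = (φ + ψ) * φ ^ n - q ^ n • (φ ^ n * ψ) := by
      rw [← psi_pow q φ ψ hcomm, add_mul, pow_succ']; abel
    have hA : (φ + ψ) * φ ^ n = ∑ l ∈ Finset.range (n + 1 + 1),
        ((-1 : k) ^ l * q ^ (l.choose 2) * gaussB q n l) •
          ((φ + ψ) ^ (n + 1 - l) * ψ ^ l) := by
      rw [Finset.sum_range_succ, gaussB_lt q n (n + 1) (by omega), mul_zero, zero_smul, add_zero,
        ih, Finset.mul_sum]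
      refine Finset.sum_congr rfl fun l hl => ?_
      have : n + 1 - l = (n - l) + 1 := by have := Finset.mem_range.1 hl; omega
      rw [this, pow_succ' (φ + ψ), mul_smul_comm, mul_assoc (φ + ψ)]
    have hB : q ^ n • (φ ^ n * ψ) = ∑ l ∈ Finset.range (n + 1),
        (q ^ n * ((-1 : k) ^ l * q ^ (l.choose 2) * gaussB q n l)) •
          ((φ + ψ) ^ (n - l) * ψ ^ (l + 1)) := by
      conv_lhs => rw [ih]
      rw [Finset.sum_mul, Finset.smul_sum]
      refine Finset.sum_congr rfl fun l hl => ?_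
      rw [smul_mul_assoc, smul_smul, mul_assoc ((φ + ψ) ^ (n - l)), ← pow_succ]
    rw [h, hA, hB, Finset.sum_range_succ', Finset.sum_range_succ' _ (n + 1), gaussB_zero,
      gaussB_zero, add_sub_right_comm, ← Finset.sum_sub_distrib]
    congr 1
    refine Finset.sum_congr rfl fun l hl => ?_
    rw [Nat.add_sub_add_right, ← sub_smul, gaussB_succ]
    congr 1
    have hc : (l + 1).choose 2 = l + l.choose 2 := by
      rw [Nat.choose_succ_succ' l 1, Nat.choose_one_right]
    have hn : q ^ n = q ^ l * q ^ (n - l) := by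
      rw [← pow_add]; congr 1; have := Finset.mem_range.1 hl; omega
    rw [hc, hn, pow_add]
    ring

theorem qFact_nzd {k : Type*} [CommRing k] (N : ℕ) (q : k)
    (hq2 : ∀ l : ℕ, 1 ≤ l → l ≤ N - 1 → q ^ l - 1 ∈ nonZeroDivisors k)
    (m : ℕ) (hm : m < N) : qFact q m ∈ nonZeroDivisors k := by
  unfold qFact
  refine prod_mem fun i hi => ?_
  have hi' := Finset.mem_range.1 hi
  have h := hq2 (i + 1) (by omega) (by omega)
  rw [← geom_sum_mul] at h
  exact (mul_mem_nonZeroDivisors.1 h).1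

/-- if `ψ∘φ = q⬝(φ∘ψ)` then
`φ^n = Σ_{l=0}^{n} (−1)^l ⬝ q^{l(l−1)/2} ⬝ [n choose l] ⬝ (φ + ψ)^{n−l} ∘ ψ^{l}`
for `1 ≤ n ≤ N`. -/
theorem pow_eq_q_alternating_sum_of_q_commute
    {k : Type*} [CommRing k] (N : ℕ) (hN : 2 ≤ N) (q : k)
    (hq1 : q ^ N = 1)
    (hq2 : ∀ l : ℕ, 1 ≤ l → l ≤ N - 1 → q ^ l - 1 ∈ nonZeroDivisors k)
    {X : Type*} [AddCommGroup X] [Module k X]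
    (φ ψ : Module.End k X) (hcomm : ψ * φ = q • (φ * ψ))
    (n : ℕ) (hn1 : 1 ≤ n) (hnN : n ≤ N)
    (c : ℕ → k) (hc : ∀ l ≤ n, QBinomSpec q N n l (c l)) :
    φ ^ n = ∑ l ∈ Finset.range (n + 1),
      ((-1 : k) ^ l * q ^ (l * (l - 1) / 2) * c l) • ((φ + ψ) ^ (n - l) * ψ ^ l) := by
  rw [gauss_expand q φ ψ hcomm n]
  refine Finset.sum_congr rfl fun l hl => ?_
  have hl' : l ≤ n := by have := Finset.mem_range.1 hl; omega
  rw [Nat.choose_two_right]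
  have key : gaussB q n l = c l := by
    obtain ⟨h1, h2⟩ := hc l hl'
    by_cases hs : n = N ∧ (l = 0 ∨ l = N)
    · rw [h1 hs]
      obtain ⟨rfl, rfl | rfl⟩ := hs
      · exact gaussB_zero _ _
      · exact gaussB_self _ _
    · have h3 := h2 hs
      have h4 := gaussB_fact q n l (n - l) (by omega)
      rw [show l + (n - l) = n by omega] at h4
      have hz := mul_mem (qFact_nzd N q hq2 l (by omega)) (qFact_nzd N q hq2 (n - l) (by omega))
      exact (mul_cancel_left_mem_nonZeroDivisors hz).1 (h4.trans h3.symm)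
  rw [key]
end

section
/- Let k be a commutative ring with unity, N ≥ 2 an integer, q ∈ k a primitive N-th root of unity, U and V k-modules, and d_U, d_V k-linear endomorphisms of U and V respectively with d_U^N = 0 and d_V^N = 0. For each s ∈ ℤ define the k-linear operator D_s on Hom_k(U,V) by D_s(g) = d_V∘g − q^s·(g∘d_U). Then for every r ∈ ℤ the N-fold composite D_{r+N−1}∘⋯∘D_{r+1}∘D_r is the zero operator on Hom_k(U,V). (That is, the Hom-complex Hom^{•q}(U,V) of two N-differential graded k-modules is again an N-differential graded k-module.) -/
/-- The differential of the Hom-complex `Hom^{•q}(U,V)` in degree `s`: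
`D_s(g) = d_V ∘ g − q^s ⬝ (g ∘ d_U)`, where `q = ↑u` is a unit (so `q^s` makes sense
for `s : ℤ`). -/
def homDiff {k : Type*} [CommRing k] {U V : Type*} [AddCommGroup U] [AddCommGroup V]
    [Module k U] [Module k V] (u : kˣ) (dU : U →ₗ[k] U) (dV : V →ₗ[k] V)
    (s : ℤ) (g : U →ₗ[k] V) : U →ₗ[k] V :=
  dV ∘ₗ g - ((u ^ s : kˣ) : k) • (g ∘ₗ dU)

open Polynomial in
theorem homDiff_aux_poly {k : Type*} [CommRing k] (N : ℕ) (u : kˣ) (hq1 : (u : k) ^ N = 1) (r : ℤ)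
    (hq2 : ∀ l : ℕ, 1 ≤ l → l ≤ N - 1 → (u : k) ^ l - 1 ∈ nonZeroDivisors k) (j : ℕ)
    (hj : 1 ≤ j) (hj2 : j ≤ N - 1) :
    (∏ i ∈ Finset.range N, (X - C ((u ^ (r + (i : ℤ)) : kˣ) : k))).coeff j = 0 := by
  set P : k[X] := ∏ i ∈ Finset.range N, (X - C ((u ^ (r + (i : ℤ)) : kˣ) : k)) with hP
  have huN : u ^ N = 1 := by ext; simpa using hq1
  have hcomp : P.comp (C (u : k) * X) =
      ∏ i ∈ Finset.range N, (X - C ((u ^ (r - 1 + (i : ℤ)) : kˣ) : k)) := by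
    have h1 : ∀ i : ℕ, (X - C ((u ^ (r + (i : ℤ)) : kˣ) : k)).comp (C (u : k) * X)
        = C (u : k) * (X - C ((u ^ (r - 1 + (i : ℤ)) : kˣ) : k)) := by
      intro i
      have : u ^ (r + (i : ℤ)) = u * u ^ (r - 1 + (i : ℤ)) := by
        rw [← zpow_one_add]; congr 1; ring
      rw [this]
      simp only [sub_comp, X_comp, C_comp, Units.val_mul]
      rw [C_mul]
      ring
    rw [hP, prod_comp, Finset.prod_congr rfl (fun i _ => h1 i), Finset.prod_mul_distrib]
    simp [← C_pow, hq1]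
  have hE : P.comp (C (u : k) * X) = P := by
    have hm : (X - C ((u ^ (r - 1) : kˣ) : k)).Monic := monic_X_sub_C _
    have h2 := Finset.prod_range_succ
      (fun i : ℕ => (X - C ((u ^ (r - 1 + (i : ℤ)) : kˣ) : k))) N
    rw [Finset.prod_range_succ', ← hcomp] at h2
    have h3 : u ^ (r - 1 + (N : ℤ)) = u ^ (r - 1) := by
      rw [zpow_add, zpow_natCast, huN, mul_one]
    have h4 : ∀ i : ℕ, r - 1 + ((i + 1 : ℕ) : ℤ) = r + i := by intro i; push_cast; ring
    simp only [h3, h4, Nat.cast_zero, add_zero] at h2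
    exact (hm.isRegular.right h2).symm
  have h5 : P.coeff j * (u : k) ^ j = P.coeff j := by
    conv_rhs => rw [← hE]
    rw [comp_C_mul_X_coeff]
  exact (mul_right_mem_nonZeroDivisors_eq_zero_iff (hq2 j hj hj2)).1
    (by rw [mul_sub, h5, mul_one, sub_self])

open Polynomial in
theorem homDiff_aux_fold {k : Type*} [CommRing k] (u : kˣ)
    {U V : Type*} [AddCommGroup U] [AddCommGroup V] [Module k U] [Module k V]
    (dU : U →ₗ[k] U) (dV : V →ₗ[k] V) (r : ℤ) (f : U →ₗ[k] V) (n : ℕ) :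
    (List.range n).foldl (fun g (i : ℕ) => homDiff u dU dV (r + (i : ℤ)) g) f =
      ∑ p ∈ Finset.HasAntidiagonal.antidiagonal n,
        (∏ i ∈ Finset.range n, (X - C ((u ^ (r + (i : ℤ)) : kˣ) : k))).coeff p.1 •
          ((dV ^ p.1) ∘ₗ f ∘ₗ (dU ^ p.2)) := by
  induction n with
  | zero => simp; rfl
  | succ n ih =>
    rw [List.range_succ, List.foldl_append, ih, Finset.prod_range_succ]
    set P : k[X] := ∏ i ∈ Finset.range n, (X - C ((u ^ (r + (i : ℤ)) : kˣ) : k)) with hP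
    have hdeg : P.coeff (n + 1) = 0 := by
      apply coeff_eq_zero_of_natDegree_lt
      refine lt_of_le_of_lt (natDegree_prod_le _ _) ?_
      refine lt_of_le_of_lt (Finset.sum_le_sum (fun i _ => natDegree_X_sub_C_le _)) ?_
      simp
    simp only [List.foldl_cons, List.foldl_nil, homDiff, mul_sub, coeff_sub, sub_smul,
      Finset.sum_sub_distrib]
    congr 1
    · rw [Finset.Nat.sum_antidiagonal_succ]
      simp only [coeff_mul_X, coeff_mul_X_zero, mul_coeff_zero, coeff_X_zero, mul_zero, zero_smul,
        zero_add]
      ext x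
      simp [LinearMap.sum_apply, pow_succ']
    · rw [Finset.Nat.sum_antidiagonal_succ']
      simp only [coeff_mul_C, hdeg, zero_mul, zero_smul, add_zero, zero_add]
      ext x
      simp [LinearMap.sum_apply, pow_succ, Finset.smul_sum, smul_smul, mul_comm]

/-- if `d_U^N = 0` and `d_V^N = 0`, then for every `r : ℤ` the `N`-fold
composite `D_{r+N−1}∘⋯∘D_{r+1}∘D_r` is the zero operator on `Hom_k(U,V)`; i.e. the
Hom-complex of two `N`-differential graded `k`-modules is again `N`-differential. -/
theorem homDiff_iterate_N_eq_zero
    {k : Type*} [CommRing k] (N : ℕ) (hN : 2 ≤ N) (q : k)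
    (hq1 : q ^ N = 1)
    (hq2 : ∀ l : ℕ, 1 ≤ l → l ≤ N - 1 → q ^ l - 1 ∈ nonZeroDivisors k)
    (u : kˣ) (hu : (u : k) = q)
    {U V : Type*} [AddCommGroup U] [AddCommGroup V] [Module k U] [Module k V]
    (dU : U →ₗ[k] U) (dV : V →ₗ[k] V)
    (hdU : dU ^ N = 0) (hdV : dV ^ N = 0)
    (r : ℤ) (f : U →ₗ[k] V) :
    (List.range N).foldl (fun g i => homDiff u dU dV (r + (i : ℤ)) g) f = 0 := by
  subst hu
  have hl : (List.range N >>= fun a => pure (a : ℤ)) = (List.range N).map (fun a : ℕ => (a : ℤ)) :=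
    bind_pure_comp _ _
  rw [hl, List.foldl_map, homDiff_aux_fold]
  refine Finset.sum_eq_zero fun p hp => ?_
  have hp' := Finset.HasAntidiagonal.mem_antidiagonal.1 hp
  rcases Nat.eq_zero_or_pos p.1 with h | h
  · have : p.2 = N := by omega
    rw [this, hdU]; simp
  · rcases Nat.eq_zero_or_pos p.2 with h2 | h2
    · have : p.1 = N := by omega
      rw [this, hdV]; simp
    · rw [homDiff_aux_poly N u hq1 r hq2 p.1 h (by omega), zero_smul]
end

section
/- Let k be a commutative ring with unity, N ≥ 2 an integer, and q ∈ k a primitive N-th root of unity. Let U = (U^i)_{i∈ℤ} and V = (V^i)_{i∈ℤ} be N-differential graded k-modules, i.e. ℤ-graded k-modules with degree-1 k-linear maps d_U, d_V whose N-fold iterates vanish (d_U^{(N)} = 0 and d_V^{(N)} = 0). Let U⊗^{•q}V be the graded k-module with (U⊗^{•q}V)^n = ⊕_{r+s=n} U^r ⊗_k V^s and degree-1 differential d determined on pure tensors by d(u⊗v) = d_U(u)⊗v + q^r·u⊗d_V(v) for u ∈ U^r. Then the N-fold iterate of d vanishes: d^{(N)} = 0, i.e. U⊗^{•q}V is an N-differential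 graded k-module. -/
open scoped TensorProduct DirectSum

/-- Transport a graded component along an equality of degrees. -/
def castLM {k : Type*} [CommRing k] {X : ℤ → Type*} [∀ i, AddCommGroup (X i)]
    [∀ i, Module k (X i)] {i j : ℤ} (h : i = j) : X i →ₗ[k] X j := by
  subst h; exact LinearMap.id

/-- The `l`-fold iterate `d^{(l),i} : X^i → X^{i+l}` of a degree-1 family of maps. -/
def dpow {k : Type*} [CommRing k] {X : ℤ → Type*} [∀ i, AddCommGroup (X i)]
    [∀ i, Module k (X i)] (d : ∀ i : ℤ, X i →ₗ[k] X (i + 1)) :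
    (l : ℕ) → (i : ℤ) → (X i →ₗ[k] X (i + l))
  | 0, i => castLM (by simp)
  | l + 1, i => castLM (by push_cast; ring) ∘ₗ (dpow d l (i + 1)) ∘ₗ d i

/-- The differential of the twisted tensor product `U ⊗^{•q} V` on the bigraded
direct sum `⨁_{(r,s)} U^r ⊗ V^s`, given on the `(r,s)` component by
`u⊗v ↦ d_U(u)⊗v + q^r ⬝ u⊗d_V(v)`. -/
noncomputable def tensorDiff {k : Type*} [CommRing k] (u : kˣ)
    (U V : ℤ → Type*) [∀ i, AddCommGroup (U i)] [∀ i, Module k (U i)]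
    [∀ i, AddCommGroup (V i)] [∀ i, Module k (V i)]
    (dU : ∀ i : ℤ, U i →ₗ[k] U (i + 1)) (dV : ∀ i : ℤ, V i →ₗ[k] V (i + 1)) :
    (⨁ p : ℤ × ℤ, U p.1 ⊗[k] V p.2) →ₗ[k] (⨁ p : ℤ × ℤ, U p.1 ⊗[k] V p.2) :=
  DirectSum.toModule k (ℤ × ℤ) _ (fun p =>
    ((DirectSum.lof k (ℤ × ℤ) (fun p : ℤ × ℤ => U p.1 ⊗[k] V p.2) (p.1 + 1, p.2)) ∘ₗ
      (TensorProduct.map (dU p.1) LinearMap.id))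
    + ((u ^ p.1 : kˣ) : k) •
      ((DirectSum.lof k (ℤ × ℤ) (fun p : ℤ × ℤ => U p.1 ⊗[k] V p.2) (p.1, p.2 + 1)) ∘ₗ
        (TensorProduct.map LinearMap.id (dV p.2))))

/-- Coefficients of the `q`-binomial theorem, indexed by the exponents `(a, b)`. -/
def qc {k : Type*} [CommRing k] (q : k) : ℕ → ℕ → k
  | 0, 0 => 1
  | 0, b + 1 => qc q 0 b
  | a + 1, 0 => qc q a 0
  | a + 1, b + 1 => qc q a (b + 1) + q ^ (a + 1) * qc q (a + 1) b

/-- The product of `q ^ (i + 1) - 1` over `i < n`. -/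
def qP {k : Type*} [CommRing k] (q : k) (n : ℕ) : k := ∏ i ∈ Finset.range n, (q ^ (i + 1) - 1)

theorem qc_zero_left {k : Type*} [CommRing k] (q : k) (b : ℕ) : qc q 0 b = 1 := by
  induction b with
  | zero => simp [qc]
  | succ b ih => simp [qc, ih]

theorem qc_zero_right {k : Type*} [CommRing k] (q : k) (a : ℕ) : qc q a 0 = 1 := by
  induction a with
  | zero => simp [qc]
  | succ b ih => simp [qc, ih]

theorem qP_succ {k : Type*} [CommRing k] (q : k) (n : ℕ) :
    qP q (n + 1) = qP q n * (q ^ (n + 1) - 1) := by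
  simp [qP, Finset.prod_range_succ]

theorem qc_mul {k : Type*} [CommRing k] (q : k) (n : ℕ) : ∀ a b : ℕ, a + b = n →
    qP q a * qP q b * qc q a b = qP q n := by
  induction n with
  | zero =>
    intro a b h
    obtain ⟨rfl, rfl⟩ : a = 0 ∧ b = 0 := by omega
    simp [qc, qP]
  | succ n ih =>
    intro a b h
    rcases a with _ | a
    · obtain rfl : b = n + 1 := by omega
      rw [qc_zero_left]; simp [qP]
    rcases b with _ | b
    · obtain rfl : a = n := by omega
      rw [qc_zero_right]; simp [qP]
    have h1 := ih a (b + 1) (by omega)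
    have h2 := ih (a + 1) b (by omega)
    rw [qP_succ q n]
    have e : q ^ (n + 1) = q ^ (a + 1) * q ^ (b + 1) := by rw [← pow_add, h]
    rw [e]
    rw [qP_succ] at h1 h2 ⊢
    rw [qP_succ, qc]
    linear_combination (q ^ (a + 1) - 1) * h1 + q ^ (a + 1) * (q ^ (b + 1) - 1) * h2

theorem qc_eq_zero {k : Type*} [CommRing k] (N : ℕ) (q : k) (hq1 : q ^ N = 1)
    (hq2 : ∀ l : ℕ, 1 ≤ l → l ≤ N - 1 → q ^ l - 1 ∈ nonZeroDivisors k)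
    (a b : ℕ) (h : a + b = N) (ha : a ≠ 0) (hb : b ≠ 0) : qc q a b = 0 := by
  have hP : ∀ n, n < N → qP q n ∈ nonZeroDivisors k := by
    intro n hn
    refine Submonoid.prod_mem _ ?_
    intro i hi
    have := Finset.mem_range.1 hi
    exact hq2 _ (by omega) (by omega)
  have h0 : qP q N = 0 := by
    obtain ⟨M, rfl⟩ : ∃ M, N = M + 1 := ⟨N - 1, by omega⟩
    rw [qP_succ, hq1]; simp
  have h1 := qc_mul q N a b h
  rw [h0] at h1
  have h2 := mul_mem (hP a (by omega)) (hP b (by omega))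
  rw [mul_comm] at h1
  exact (mul_right_mem_nonZeroDivisors_eq_zero_iff h2).1 h1

theorem comm_pow {k E : Type*} [CommRing k] [Ring E] [Algebra k E] (q : k) (A B : E)
    (h : B * A = q • (A * B)) (n : ℕ) : B * A ^ n = q ^ n • (A ^ n * B) := by
  induction n with
  | zero => simp
  | succ n ih =>
    rw [pow_succ, ← mul_assoc, ih, smul_mul_assoc, mul_assoc, h, mul_smul_comm, smul_smul,
      ← mul_assoc, ← pow_succ]

theorem q_binomial {k E : Type*} [CommRing k] [Ring E] [Algebra k E] (q : k) (A B : E)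
    (h : B * A = q • (A * B)) (n : ℕ) :
    (A + B) ^ n = ∑ p ∈ Finset.HasAntidiagonal.antidiagonal n, qc q p.1 p.2 • (A ^ p.1 * B ^ p.2) := by
  induction n with
  | zero => simp [qc]
  | succ n ih =>
    let g1 : ℕ → ℕ → k := fun a b => Nat.casesOn a 0 (fun a => qc q a b)
    let g2 : ℕ → ℕ → k := fun a b => Nat.casesOn b 0 (fun b => q ^ a * qc q a b)
    have key : ∀ p ∈ Finset.HasAntidiagonal.antidiagonal (n + 1), qc q p.1 p.2 • (A ^ p.1 * B ^ p.2)
        = g1 p.1 p.2 • (A ^ p.1 * B ^ p.2) + g2 p.1 p.2 • (A ^ p.1 * B ^ p.2) := by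
      rintro ⟨a, b⟩ hp
      have hab : a + b = n + 1 := by simpa using hp
      rw [← add_smul]
      congr 1
      rcases a with _ | a <;> rcases b with _ | b
      · omega
      · simp [g1, g2, qc]
      · simp [g1, g2, qc]
      · simp [g1, g2, qc]
    rw [Finset.sum_congr rfl key, Finset.sum_add_distrib, Finset.Nat.sum_antidiagonal_succ,
      Finset.Nat.sum_antidiagonal_succ', pow_succ', ih, add_mul, Finset.mul_sum, Finset.mul_sum]
    have z1 : ∀ b, g1 0 b = 0 := fun _ => rfl
    have z2 : ∀ a, g2 a 0 = 0 := fun _ => rfl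
    have s1 : ∀ a b, g1 (a + 1) b = qc q a b := fun _ _ => rfl
    have s2 : ∀ a b, g2 a (b + 1) = q ^ a * qc q a b := fun _ _ => rfl
    simp only [z1, z2, s1, s2, zero_smul, zero_add, add_zero]
    congr 1
    · refine Finset.sum_congr rfl fun p _ => ?_
      rw [mul_smul_comm, ← mul_assoc, ← pow_succ']
    · refine Finset.sum_congr rfl fun p _ => ?_
      rw [mul_smul_comm, ← mul_assoc, comm_pow q A B h, smul_mul_assoc, smul_smul, mul_assoc,
        ← pow_succ', mul_comm]

section parts

variable {k : Type*} [CommRing k] (u : kˣ)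
    (U V : ℤ → Type*) [∀ i, AddCommGroup (U i)] [∀ i, Module k (U i)]
    [∀ i, AddCommGroup (V i)] [∀ i, Module k (V i)]
    (dU : ∀ i : ℤ, U i →ₗ[k] U (i + 1)) (dV : ∀ i : ℤ, V i →ₗ[k] V (i + 1))

/-- The pure tensor in bidegree `(r, s)`. -/
noncomputable def pt (r s : ℤ) (x : U r) (y : V s) : ⨁ p : ℤ × ℤ, U p.1 ⊗[k] V p.2 :=
  DirectSum.lof k (ℤ × ℤ) (fun p : ℤ × ℤ => U p.1 ⊗[k] V p.2) (r, s) (x ⊗ₜ[k] y)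

/-- The first summand of the differential. -/
noncomputable def dA :
    (⨁ p : ℤ × ℤ, U p.1 ⊗[k] V p.2) →ₗ[k] (⨁ p : ℤ × ℤ, U p.1 ⊗[k] V p.2) :=
  DirectSum.toModule k (ℤ × ℤ) _ (fun p =>
    ((DirectSum.lof k (ℤ × ℤ) (fun p : ℤ × ℤ => U p.1 ⊗[k] V p.2) (p.1 + 1, p.2)) ∘ₗ
      (TensorProduct.map (dU p.1) LinearMap.id)))

/-- The second summand of the differential. -/
noncomputable def dB :
    (⨁ p : ℤ × ℤ, U p.1 ⊗[k] V p.2) →ₗ[k] (⨁ p : ℤ × ℤ, U p.1 ⊗[k] V p.2) :=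
  DirectSum.toModule k (ℤ × ℤ) _ (fun p =>
    ((u ^ p.1 : kˣ) : k) •
      ((DirectSum.lof k (ℤ × ℤ) (fun p : ℤ × ℤ => U p.1 ⊗[k] V p.2) (p.1, p.2 + 1)) ∘ₗ
        (TensorProduct.map LinearMap.id (dV p.2))))

theorem dA_pt (r s : ℤ) (x : U r) (y : V s) :
    dA (k := k) U V dU (pt (k := k) U V r s x y) = pt (k := k) U V (r + 1) s (dU r x) y := by
  unfold dA pt
  erw [DirectSum.toModule_lof]
  simp

theorem dB_pt (r s : ℤ) (x : U r) (y : V s) :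
    dB (k := k) u U V dV (pt (k := k) U V r s x y)
      = ((u ^ r : kˣ) : k) • pt (k := k) U V r (s + 1) x (dV s y) := by
  unfold dB pt
  erw [DirectSum.toModule_lof]
  simp

theorem tensorDiff_eq : tensorDiff u U V dU dV = dA U V dU + dB u U V dV := by
  refine DirectSum.linearMap_ext _ fun p => ?_
  ext x y
  simp [tensorDiff, dA, dB, DirectSum.toModule_lof]

theorem end_ext {f g : (⨁ p : ℤ × ℤ, U p.1 ⊗[k] V p.2) →ₗ[k] (⨁ p : ℤ × ℤ, U p.1 ⊗[k] V p.2)}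
    (h : ∀ r s x y, f (pt (k := k) U V r s x y) = g (pt (k := k) U V r s x y)) : f = g := by
  refine DirectSum.linearMap_ext _ fun p => ?_
  refine TensorProduct.ext' fun x y => ?_
  exact h p.1 p.2 x y

theorem pt_cast_left {r r' : ℤ} (h : r = r') (s : ℤ) (x : U r) (y : V s) :
    pt (k := k) U V r' s (castLM (k := k) h x) y = pt (k := k) U V r s x y := by
  subst h; rfl

theorem pt_cast_right {s s' : ℤ} (h : s = s') (r : ℤ) (x : U r) (y : V s) :
    pt (k := k) U V r s' x (castLM (k := k) h y) = pt (k := k) U V r s x y := by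
  subst h; rfl

theorem dA_pow (n : ℕ) : ∀ (r s : ℤ) (x : U r) (y : V s),
    (dA (k := k) U V dU ^ n) (pt (k := k) U V r s x y)
      = pt (k := k) U V (r + n) s (dpow dU n r x) y := by
  induction n with
  | zero =>
    intro r s x y
    rw [dpow, pt_cast_left]; simp
  | succ n ih =>
    intro r s x y
    rw [pow_succ, Module.End.mul_apply, dA_pt, ih, dpow, LinearMap.comp_apply, pt_cast_left,
      LinearMap.comp_apply]

theorem dB_pow (n : ℕ) : ∀ (r s : ℤ) (x : U r) (y : V s),
    (dB (k := k) u U V dV ^ n) (pt (k := k) U V r s x y)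
      = ((u ^ r : kˣ) : k) ^ n • pt (k := k) U V r (s + n) x (dpow dV n s y) := by
  induction n with
  | zero =>
    intro r s x y
    rw [dpow, pt_cast_right]; simp
  | succ n ih =>
    intro r s x y
    rw [pow_succ, Module.End.mul_apply, dB_pt, map_smul, ih, dpow, LinearMap.comp_apply,
      pt_cast_right, LinearMap.comp_apply, smul_smul, pow_succ']

theorem dB_dA : dB u U V dV * dA U V dU = (u : k) • (dA U V dU * dB u U V dV) := by
  refine end_ext U V fun r s x y => ?_
  rw [Module.End.mul_apply, LinearMap.smul_apply, Module.End.mul_apply, dA_pt, dB_pt, dB_pt,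
    map_smul, dA_pt, smul_smul, zpow_add_one, Units.val_mul, mul_comm]

theorem dA_pow_zero (N : ℕ) (hdU : ∀ i : ℤ, dpow dU N i = 0) : dA (k := k) U V dU ^ N = 0 := by
  refine end_ext U V fun r s x y => ?_
  rw [dA_pow, hdU]
  simp [pt]

theorem dB_pow_zero (N : ℕ) (hdV : ∀ i : ℤ, dpow dV N i = 0) : dB u U V dV ^ N = 0 := by
  refine end_ext U V fun r s x y => ?_
  rw [dB_pow, hdV]
  simp [pt]

end parts

/-- if `U` and `V` are `N`-differential graded `k`-modules
(`d_U^{(N)} = 0` and `d_V^{(N)} = 0`), then the differential of the twisted tensor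
product `U ⊗^{•q} V` also satisfies `d^{(N)} = 0`. -/
theorem tensorDiff_pow_N_eq_zero
    {k : Type*} [CommRing k] (N : ℕ) (hN : 2 ≤ N) (q : k)
    (hq1 : q ^ N = 1)
    (hq2 : ∀ l : ℕ, 1 ≤ l → l ≤ N - 1 → q ^ l - 1 ∈ nonZeroDivisors k)
    (u : kˣ) (hu : (u : k) = q)
    (U V : ℤ → Type*) [∀ i, AddCommGroup (U i)] [∀ i, Module k (U i)]
    [∀ i, AddCommGroup (V i)] [∀ i, Module k (V i)]
    (dU : ∀ i : ℤ, U i →ₗ[k] U (i + 1)) (dV : ∀ i : ℤ, V i →ₗ[k] V (i + 1))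
    (hdU : ∀ i : ℤ, dpow dU N i = 0) (hdV : ∀ i : ℤ, dpow dV N i = 0) :
    (tensorDiff u U V dU dV) ^ N = 0 := by
  rw [tensorDiff_eq]
  refine (q_binomial (E := Module.End k (⨁ p : ℤ × ℤ, U p.1 ⊗[k] V p.2)) (u : k)
    (dA U V dU) (dB u U V dV) (dB_dA u U V dU dV) N).trans ?_
  refine Finset.sum_eq_zero ?_
  rintro ⟨a, b⟩ hp
  have hab : a + b = N := by simpa using hp
  subst hu
  rcases Nat.eq_zero_or_pos a with rfl | ha
  · obtain rfl : b = N := by omega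
    simp [dB_pow_zero u U V dV b hdV]
  rcases Nat.eq_zero_or_pos b with rfl | hb
  · obtain rfl : a = N := by omega
    simp [dA_pow_zero U V dU a hdU]
  rw [qc_eq_zero N (u : k) hq1 hq2 a b hab (by omega) (by omega), zero_smul]
end

section
/- Let k be a commutative ring with unity, N ≥ 2 an integer, q ∈ k a primitive N-th root of unity, U and V k-modules, and d_U, d_V k-linear endomorphisms of U and V respectively. For each s ∈ ℤ define the k-linear operator D_s on Hom_k(U,V) by D_s(g) = d_V∘g − q^s·(g∘d_U), where integer powers of the unit q are used. Then for every f ∈ Hom_k(U,V): (D_{−1}∘D_{−2}∘⋯∘D_{1−N})(f) = Σ_{l=0}^{N−1} d_V^{N−1−l}∘f∘d_U^{l}. (This says that the (N−1)-st iterated differential of the Hom-complex applied to a homogeneous morphism of degree 1−N is the plain sum Σ_l d^{N−1−l}∘f∘d^{l}, so the homotopy relation in the homotopy category of N-differential graded modules agrees with Kapranov's.) -/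
/-- Coefficients of `∏_{i=1}^m (L - q^i R)`. -/
def qcoef {k : Type*} [CommRing k] (q : k) : ℕ → ℕ → k
  | 0, 0 => 1
  | 0, _ + 1 => 0
  | m + 1, 0 => qcoef q m 0
  | m + 1, l + 1 => qcoef q m (l + 1) - q ^ (m + 1) * qcoef q m l

lemma qcoef_zero {k : Type*} [CommRing k] (q : k) (m : ℕ) : qcoef q m 0 = 1 := by
  induction m with
  | zero => simp [qcoef]
  | succ m ih => simp [qcoef, ih]

lemma qcoef_gt {k : Type*} [CommRing k] (q : k) (m : ℕ) :
    ∀ l, m < l → qcoef q m l = 0 := by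
  induction m with
  | zero => intro l hl; cases l with
    | zero => omega
    | succ l => simp [qcoef]
  | succ m ih => intro l hl; cases l with
    | zero => omega
    | succ l => simp [qcoef, ih (l + 1) (by omega), ih l (by omega)]

lemma qcoef_mul {k : Type*} [CommRing k] (q : k) (m : ℕ) :
    ∀ l, qcoef q m l * ∏ j ∈ Finset.range l, (1 - q ^ (j + 1)) =
      ∏ j ∈ Finset.range l, (q ^ (m + 1) - q ^ (j + 1)) := by
  induction m with
  | zero =>
    intro l
    cases l with
    | zero => simp [qcoef]
    | succ l => rw [Finset.prod_range_succ' (fun j => q ^ (0 + 1) - q ^ (j + 1))]; simp [qcoef]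
  | succ m ih =>
    intro l
    cases l with
    | zero => simp [qcoef_zero]
    | succ l =>
      have h1 := ih (l + 1)
      have h2 := ih l
      have h3 : ∏ j ∈ Finset.range (l + 1), (q ^ (m + 1 + 1) - q ^ (j + 1)) =
          q ^ (l + 1) * ((∏ j ∈ Finset.range l, (q ^ (m + 1) - q ^ (j + 1))) *
            (q ^ (m + 1) - 1)) := by
        have : ∀ j ∈ Finset.range (l + 1), (q ^ (m + 1 + 1) - q ^ (j + 1)) =
            q * (q ^ (m + 1) - q ^ j) := fun j _ => by ring
        rw [Finset.prod_congr rfl this, Finset.prod_mul_distrib,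
          Finset.prod_range_succ' (fun j => q ^ (m + 1) - q ^ j)]
        simp
      rw [h3]
      rw [Finset.prod_range_succ, Finset.prod_range_succ] at h1
      rw [Finset.prod_range_succ, qcoef]
      linear_combination h1 - q ^ (m + 1) * (1 - q ^ (l + 1)) * h2

lemma homDiff_fold {k : Type*} [CommRing k] (u : kˣ) (e : ℕ → ℤ)
    (he : ∀ i, u ^ e i = u ^ (i + 1))
    {U V : Type*} [AddCommGroup U] [AddCommGroup V] [Module k U] [Module k V]
    (dU : U →ₗ[k] U) (dV : V →ₗ[k] V) (f : U →ₗ[k] V) (m : ℕ) :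
    (List.range m).foldl (fun g i => homDiff u dU dV (e i) g) f =
      ∑ l ∈ Finset.range (m + 1), qcoef (u : k) m l • ((dV ^ (m - l)) ∘ₗ f ∘ₗ (dU ^ l)) := by
  induction m with
  | zero => ext x; simp [qcoef]
  | succ m ih =>
    rw [List.range_succ, List.foldl_append, ih]
    simp only [List.foldl_cons, List.foldl_nil, homDiff, he]
    have h1 : dV ∘ₗ (∑ l ∈ Finset.range (m + 1),
          qcoef (u : k) m l • ((dV ^ (m - l)) ∘ₗ f ∘ₗ (dU ^ l))) =
        ∑ l ∈ Finset.range (m + 1 + 1),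
          qcoef (u : k) m l • ((dV ^ (m + 1 - l)) ∘ₗ f ∘ₗ (dU ^ l)) := by
      rw [Finset.sum_range_succ _ (m + 1), qcoef_gt _ m (m + 1) (by omega), zero_smul, add_zero]
      ext x
      simp only [LinearMap.comp_apply, LinearMap.sum_apply, map_sum, LinearMap.smul_apply,
        map_smul]
      refine Finset.sum_congr rfl fun l hl => ?_
      have : m + 1 - l = (m - l) + 1 := by have := Finset.mem_range.1 hl; omega
      rw [this, pow_succ']
      rfl
    rw [h1, Finset.sum_range_succ', Finset.sum_range_succ' _ (m + 1)]
    ext x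
    simp only [LinearMap.comp_apply, LinearMap.sum_apply, LinearMap.smul_apply,
      LinearMap.add_apply, LinearMap.sub_apply, qcoef, sub_smul, Finset.sum_sub_distrib,
      Finset.smul_sum, mul_smul, Nat.add_sub_add_right, Units.val_pow_eq_pow_val, pow_succ dU,
      Module.End.mul_apply]
    abel

/-- for a homogeneous morphism `f` of degree `1−N`, the `(N−1)`-st iterated
differential of the Hom-complex is the plain sum:
`(D_{−1}∘D_{−2}∘⋯∘D_{1−N})(f) = Σ_{l=0}^{N−1} d_V^{N−1−l}∘f∘d_U^{l}`. -/
theorem homDiff_iterate_degree_one_sub_N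
    {k : Type*} [CommRing k] (N : ℕ) (hN : 2 ≤ N) (q : k)
    (hq1 : q ^ N = 1)
    (hq2 : ∀ l : ℕ, 1 ≤ l → l ≤ N - 1 → q ^ l - 1 ∈ nonZeroDivisors k)
    (u : kˣ) (hu : (u : k) = q)
    {U V : Type*} [AddCommGroup U] [AddCommGroup V] [Module k U] [Module k V]
    (dU : U →ₗ[k] U) (dV : V →ₗ[k] V)
    (f : U →ₗ[k] V) :
    (List.range (N - 1)).foldl (fun g i => homDiff u dU dV (1 - (N : ℤ) + (i : ℤ)) g) f =
      ∑ l ∈ Finset.range N, (dV ^ (N - 1 - l)) ∘ₗ f ∘ₗ (dU ^ l) := by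
  have huN : u ^ N = 1 := by
    ext; simp [hu, hq1]
  have he : ∀ i : ℕ, u ^ (1 - (N : ℤ) + (i : ℤ)) = u ^ (i + 1) := by
    intro i
    have : (1 - (N : ℤ) + (i : ℤ)) = ((i + 1 : ℕ) : ℤ) - (N : ℤ) := by push_cast; ring
    rw [this, zpow_sub, zpow_natCast, zpow_natCast, huN]; simp
  have hL : (do let a ← List.range (N - 1); pure (a : ℤ) : List ℤ) =
      (List.range (N - 1)).map (fun a : ℕ => (a : ℤ)) := by
    simp [List.map_eq_flatMap]
  rw [hL, List.foldl_map, homDiff_fold u _ he, Nat.sub_add_cancel (by omega)]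
  refine Finset.sum_congr rfl fun l hl => ?_
  have hl := Finset.mem_range.1 hl
  have h := qcoef_mul q (N - 1) l
  rw [Nat.sub_add_cancel (by omega), hq1] at h
  have hA : ∏ j ∈ Finset.range l, (1 - q ^ (j + 1)) ∈ nonZeroDivisors k := by
    refine Submonoid.prod_mem _ fun j hj => ?_
    have hj := Finset.mem_range.1 hj
    have := hq2 (j + 1) (by omega) (by omega)
    rw [← neg_sub, neg_eq_neg_one_mul]
    exact mul_mem (isUnit_one.neg.mem_nonZeroDivisors) this
  have h1 : qcoef q (N - 1) l = 1 := by
    rw [← mul_cancel_right_mem_nonZeroDivisors hA, h, one_mul]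
  rw [hu, h1, one_smul]
end

section
/- Let k be a commutative ring with unity, N ≥ 2 an integer, q ∈ k a primitive N-th root of unity, and U, V, W k-modules with k-linear endomorphisms d_U, d_V, d_W respectively. For s ∈ ℤ let D_s be the operator on Hom_k(U,V) given by D_s(g) = d_V∘g − q^s·(g∘d_U), and let E_s be the operator on Hom_k(U,W) given by E_s(h) = d_W∘h − q^s·(h∘d_U). Let m, n ∈ ℤ and let G : V → W be a k-linear map satisfying d_W∘G = q^n·(G∘d_V). Then for every k-linear F' : U → V: G ∘ (D_{m−1}∘D_{m−2}∘⋯∘D_{m+1−N})(F') = q^n · (E_{m+n−1}∘E_{m+n−2}∘⋯∘E_{m+n+1−N})(G∘F'). (That is, composing an (N−1)-fold boundary of the Hom-complex with a cycle of degree n again yields an (N−1)-fold boundary.) -/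
/-- `E_{s+n}(G ∘ g) = q^n (G ∘ D_s g)`, iterated `r` times. -/
theorem comp_homDiff_foldl
    {k : Type*} [CommRing k] (u : kˣ)
    {U V W : Type*} [AddCommGroup U] [AddCommGroup V] [AddCommGroup W]
    [Module k U] [Module k V] [Module k W]
    (dU : U →ₗ[k] U) (dV : V →ₗ[k] V) (dW : W →ₗ[k] W)
    (a b n : ℤ) (hab : b = a + n) (G : V →ₗ[k] W)
    (hG : dW ∘ₗ G = ((u ^ n : kˣ) : k) • (G ∘ₗ dV))
    (F' : U →ₗ[k] V) (r : ℕ) :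
    (List.range r).foldl (fun h i => homDiff u dU dW (b + (i : ℤ)) h) (G ∘ₗ F') =
      (((u ^ n) ^ r : kˣ) : k) • (G ∘ₗ ((List.range r).foldl
        (fun g i => homDiff u dU dV (a + (i : ℤ)) g) F')) := by
  induction r with
  | zero => simp
  | succ r ih =>
    simp only [List.bind_eq_flatMap, List.pure_def] at ih ⊢
    rw [List.range_succ, List.flatMap_append, List.foldl_append, List.foldl_append, ih]
    simp only [List.flatMap_cons, List.flatMap_nil, List.append_nil, List.foldl_cons,
      List.foldl_nil]
    generalize List.foldl (fun g i => homDiff u dU dV (a + i) g) F' _ = g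
    have e : b + (r : ℤ) = n + (a + r) := by rw [hab]; ring
    unfold homDiff
    rw [e, zpow_add]
    ext x
    have h := LinearMap.congr_fun hG (g x)
    simp only [LinearMap.comp_apply, LinearMap.smul_apply] at h
    simp only [LinearMap.comp_apply, LinearMap.smul_apply, LinearMap.sub_apply, map_sub,
      map_smul, h, smul_sub, smul_smul, pow_succ, Units.val_mul]
    congr 2
    ring

/-- if `G : V → W` satisfies `d_W∘G = q^n ⬝ (G∘d_V)` (a cycle of degree `n`),
then for any `F' : U → V`,
`G ∘ (D_{m−1}∘⋯∘D_{m+1−N})(F') = q^n ⬝ (E_{m+n−1}∘⋯∘E_{m+n+1−N})(G∘F')`,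
where `D_s` (resp. `E_s`) is the degree-`s` differential of `Hom^{•q}(U,V)`
(resp. `Hom^{•q}(U,W)`). -/
theorem comp_homDiff_iterate
    {k : Type*} [CommRing k] (N : ℕ) (hN : 2 ≤ N) (q : k)
    (hq1 : q ^ N = 1)
    (hq2 : ∀ l : ℕ, 1 ≤ l → l ≤ N - 1 → q ^ l - 1 ∈ nonZeroDivisors k)
    (u : kˣ) (hu : (u : k) = q)
    {U V W : Type*} [AddCommGroup U] [AddCommGroup V] [AddCommGroup W]
    [Module k U] [Module k V] [Module k W]
    (dU : U →ₗ[k] U) (dV : V →ₗ[k] V) (dW : W →ₗ[k] W)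
    (m n : ℤ) (G : V →ₗ[k] W) (hG : dW ∘ₗ G = ((u ^ n : kˣ) : k) • (G ∘ₗ dV))
    (F' : U →ₗ[k] V) :
    G ∘ₗ ((List.range (N - 1)).foldl
        (fun g i => homDiff u dU dV (m + 1 - (N : ℤ) + (i : ℤ)) g) F') =
      ((u ^ n : kˣ) : k) • ((List.range (N - 1)).foldl
        (fun h i => homDiff u dU dW (m + n + 1 - (N : ℤ) + (i : ℤ)) h) (G ∘ₗ F')) := by
  rw [comp_homDiff_foldl u dU dV dW (m + 1 - (N : ℤ)) (m + n + 1 - (N : ℤ)) n (by ring) G hG F',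
    smul_smul, ← Units.val_mul, ← pow_succ', Nat.sub_add_cancel (by omega)]
  have h1 : u ^ N = 1 := by
    ext
    rw [Units.val_pow_eq_pow_val, hu, hq1, Units.val_one]
  have h2 : (u ^ n) ^ N = 1 := by
    rw [← zpow_natCast, zpow_comm, zpow_natCast, h1, one_zpow]
  rw [h2, Units.val_one, one_smul]
end
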